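/- Let C ≥ 5 and let w ∈ (0, 1/(4C²)). Let (p₁, θ₁), …, (p_k, θ_k) ∈ [−1/2, 1/2]² × [−1/2, 1/2] be configurations such that d((pᵢ, θᵢ), (pᵢ', θᵢ')) ≥ C²·w for all i ≠ i'. For i ∈ {1, …, k} and each integer j with |j| ≤ 1/w, set p_{i,j} = pᵢ + (0, C·j·w²) and let ψ_{i,j} = ψ^(w)_{p_{i,j}, θᵢ}. Let δ₀ > 0 and let X ⊆ Ω be a set with d(ω, ω') ≥ δ₀ for all distinct ω, ω' ∈ X. Then: (a) the map (i, j, ω) ↦ ψ_{i,j}(ω) is injective on {1,…,k} × {j ∈ ℤ : |j| ≤ 1/w} × X, and (b) for any two distinct elements ω̃, ω̃' of X̃ = ⋃_{i, |j| ≤ 1/w} ψ_{i,j}(X) one has d(ω̃, ω̃') ≥ w² · min(δ₀, 1). -/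

import Mathlib

/-- The configuration space `Ω = [−1,1]² × [−1,1]`. -/
def Omega : Set (ℝ × ℝ × ℝ) :=
  Set.Icc (-1) 1 ×ˢ Set.Icc (-1) 1 ×ˢ Set.Icc (-1) 1

/-- The vertical distance `d(ω, ω') = |y − y' − θ'(x − x')|`. -/
def vdist (ω ω' : ℝ × ℝ × ℝ) : ℝ :=
  |ω.2.1 - ω'.2.1 - ω'.2.2 * (ω.1 - ω'.1)|

/-- The affine rescaling map
`ψ^(w)_{(x₀,y₀),θ₀}(x, y, θ) = (x₀ + w·x, y₀ + w·θ₀·x + w²·y, θ₀ + w·θ)`. -/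
def psimap (w x₀ y₀ θ₀ : ℝ) (ω : ℝ × ℝ × ℝ) : ℝ × ℝ × ℝ :=
  (x₀ + w * ω.1, y₀ + w * θ₀ * ω.1 + w ^ 2 * ω.2.1, θ₀ + w * ω.2.2)

/-!
Rescaling `ω`, `ω'` about centres `p`, `p'` gives points whose signed vertical displacement is that
of the centres, plus an error of order `w`, plus `w ^ 2` times the displacement of `ω`, `ω'`. The
error vanishes when the centres differ by a vertical shift, and the last term is at most `4 * w ^ 2`
on `Ω`. So copies about centres far enough apart stay `w ^ 2`-separated, while displacements within
a copy are scaled exactly by `w ^ 2`. The centres `p_{i,j}` are far enough apart: for equal `i` the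
shifts differ by at least `C * w ^ 2 ≥ 5 * w ^ 2`, and for distinct `i` the gap `C ^ 2 * w` absorbs
the total shift `2 * C * w`.
-/

open Set

section Displacement

/-- The signed vertical displacement, whose absolute value is the vertical distance `vdist`. It is
used because it is additive under vertical shifts of the configurations. -/
def vdisp (ω ω' : ℝ × ℝ × ℝ) : ℝ :=
  ω.2.1 - ω'.2.1 - ω'.2.2 * (ω.1 - ω'.1)

/-- The vertical translate of a configuration by `s`: the centre `p_{i,j}`, together with its
direction, is `vshift (C * j * w ^ 2) (q i)`. -/
def vshift (s : ℝ) (p : ℝ × ℝ × ℝ) : ℝ × ℝ × ℝ :=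
  (p.1, p.2.1 + s, p.2.2)

/-- The rescaling map `psimap`, with its centre given as a single configuration. -/
def rescale (w : ℝ) (p ω : ℝ × ℝ × ℝ) : ℝ × ℝ × ℝ :=
  psimap w p.1 p.2.1 p.2.2 ω

lemma abs_vdisp (ω ω' : ℝ × ℝ × ℝ) : |vdisp ω ω'| = vdist ω ω' := rfl

lemma vdisp_self (ω : ℝ × ℝ × ℝ) : vdisp ω ω = 0 := by
  simp only [vdisp, sub_self, mul_zero]

lemma vdist_self (ω : ℝ × ℝ × ℝ) : vdist ω ω = 0 := by
  rw [← abs_vdisp, vdisp_self, abs_zero]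

lemma vdisp_vshift (s s' : ℝ) (p p' : ℝ × ℝ × ℝ) :
    vdisp (vshift s p) (vshift s' p') = vdisp p p' + (s - s') := by
  simp only [vdisp, vshift]
  ring

lemma vdisp_rescale (w : ℝ) (p p' ω ω' : ℝ × ℝ × ℝ) :
    vdisp (rescale w p ω) (rescale w p' ω') =
      vdisp p p' + w * ((p.2.2 - p'.2.2) * ω.1 - ω'.2.2 * (p.1 - p'.1)) + w ^ 2 * vdisp ω ω' := by
  simp only [vdisp, rescale, psimap]
  ring

end Displacement

section Distance

lemma vdist_vshift_self (s s' : ℝ) (p : ℝ × ℝ × ℝ) :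
    vdist (vshift s p) (vshift s' p) = |s - s'| := by
  rw [← abs_vdisp, vdisp_vshift, vdisp_self, zero_add]

lemma vdist_sub_abs_le_vdist_vshift (s s' : ℝ) (p p' : ℝ × ℝ × ℝ) :
    vdist p p' - |s - s'| ≤ vdist (vshift s p) (vshift s' p') := by
  rw [← abs_vdisp, ← abs_vdisp, vdisp_vshift]
  exact abs_sub_abs_le_abs_add _ _

lemma vdist_rescale_self (w : ℝ) (p ω ω' : ℝ × ℝ × ℝ) :
    vdist (rescale w p ω) (rescale w p ω') = w ^ 2 * vdist ω ω' := by
  rw [← abs_vdisp, ← abs_vdisp, vdisp_rescale, vdisp_self, sub_self, sub_self, zero_mul, mul_zero,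
    sub_self, mul_zero, zero_add, zero_add, abs_mul, abs_of_nonneg (sq_nonneg w)]

lemma mem_Omega_iff_abs_le {ω : ℝ × ℝ × ℝ} :
    ω ∈ Omega ↔ |ω.1| ≤ 1 ∧ |ω.2.1| ≤ 1 ∧ |ω.2.2| ≤ 1 := by
  simp only [Omega, mem_prod, mem_Icc, abs_le]

lemma vdist_le_four {ω ω' : ℝ × ℝ × ℝ} (hω : ω ∈ Omega) (hω' : ω' ∈ Omega) :
    vdist ω ω' ≤ 4 := by
  obtain ⟨hx, hy, -⟩ := mem_Omega_iff_abs_le.1 hω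
  obtain ⟨hx', hy', hθ'⟩ := mem_Omega_iff_abs_le.1 hω'
  calc vdist ω ω' ≤ |ω.2.1 - ω'.2.1| + |ω'.2.2| * |ω.1 - ω'.1| := by
        rw [← abs_mul]
        exact abs_sub _ _
    _ ≤ (|ω.2.1| + |ω'.2.1|) + |ω'.2.2| * (|ω.1| + |ω'.1|) := by
        gcongr <;> exact abs_sub _ _
    _ ≤ (1 + 1) + 1 * (1 + 1) := by gcongr
    _ = 4 := by norm_num

lemma vdist_sub_le_vdist_rescale {w : ℝ} (hw : 0 ≤ w) (p p' : ℝ × ℝ × ℝ) {ω ω' : ℝ × ℝ × ℝ}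
    (hω : ω ∈ Omega) (hω' : ω' ∈ Omega) :
    vdist p p' - w * (|p.2.2 - p'.2.2| + |p.1 - p'.1|) - 4 * w ^ 2 ≤
      vdist (rescale w p ω) (rescale w p' ω') := by
  set e := (p.2.2 - p'.2.2) * ω.1 - ω'.2.2 * (p.1 - p'.1)
  have he : |e| ≤ |p.2.2 - p'.2.2| + |p.1 - p'.1| := by
    refine (abs_sub _ _).trans (add_le_add ?_ ?_) <;> rw [abs_mul]
    · exact mul_le_of_le_one_right (abs_nonneg _) (mem_Omega_iff_abs_le.1 hω).1
    · exact mul_le_of_le_one_left (abs_nonneg _) (mem_Omega_iff_abs_le.1 hω').2.2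
  calc vdist p p' - w * (|p.2.2 - p'.2.2| + |p.1 - p'.1|) - 4 * w ^ 2
      ≤ |vdisp p p'| - w * |e| - w ^ 2 * vdist ω ω' := by
        rw [abs_vdisp, mul_comm 4]
        gcongr
        exact vdist_le_four hω hω'
    _ = |vdisp p p'| - |w * e| - |w ^ 2 * vdisp ω ω'| := by
        rw [abs_mul, abs_mul, abs_of_nonneg hw, abs_of_nonneg (sq_nonneg w), abs_vdisp ω ω']
    _ ≤ |vdisp p p' + w * e| - |w ^ 2 * vdisp ω ω'| := by
        gcongr
        exact abs_sub_abs_le_abs_add _ _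
    _ ≤ |vdisp p p' + w * e + w ^ 2 * vdisp ω ω'| := abs_sub_abs_le_abs_add _ _
    _ = vdist (rescale w p ω) (rescale w p' ω') := by rw [← abs_vdisp, vdisp_rescale]

end Distance

section Separation

lemma injOn_of_pairwise_le_vdist {α : Type*} {S : Set α} {f : α → ℝ × ℝ × ℝ} {ε : ℝ} (hε : 0 < ε)
    (hS : S.Pairwise fun a b ↦ ε ≤ vdist (f a) (f b)) : InjOn f S := by
  intro a ha b hb hab
  by_contra hne
  have h : ε ≤ vdist (f a) (f b) := hS ha hb hne
  rw [hab, vdist_self] at h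
  exact hε.not_ge h

lemma pairwise_le_vdist_rescale {κ : Type*} {S : Set κ} {c : κ → ℝ × ℝ × ℝ} {w δ : ℝ}
    {X : Set (ℝ × ℝ × ℝ)} (hw : 0 ≤ w)
    (hc : S.Pairwise fun a b ↦
      5 * w ^ 2 + w * (|(c a).2.2 - (c b).2.2| + |(c a).1 - (c b).1|) ≤ vdist (c a) (c b))
    (hX : X ⊆ Omega) (hXsep : X.Pairwise fun ω ω' ↦ δ ≤ vdist ω ω') :
    (S ×ˢ X).Pairwise fun a b ↦
      w ^ 2 * min δ 1 ≤ vdist (rescale w (c a.1) a.2) (rescale w (c b.1) b.2) := by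
  rintro ⟨a, ω⟩ ⟨ha, hω⟩ ⟨b, ω'⟩ ⟨hb, hω'⟩ hne
  obtain rfl | hab := eq_or_ne a b
  · have hδ : δ ≤ vdist ω ω' := hXsep hω hω' fun h ↦ hne (congrArg (Prod.mk a) h)
    rw [vdist_rescale_self]
    exact mul_le_mul_of_nonneg_left (min_le_of_left_le hδ) (sq_nonneg w)
  · have hmin : w ^ 2 * min δ 1 ≤ w ^ 2 := mul_le_of_le_one_right (sq_nonneg w) (min_le_right _ _)
    linarith [hc ha hb hab, vdist_sub_le_vdist_rescale hw (c a) (c b) (hX hω) (hX hω')]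

lemma abs_shift_sub_shift {C : ℝ} (hC : 0 ≤ C) (w J J' : ℝ) :
    |C * J * w ^ 2 - C * J' * w ^ 2| = C * |J - J'| * w ^ 2 := by
  rw [← sub_mul, ← mul_sub, abs_mul, abs_mul, abs_of_nonneg hC, abs_of_nonneg (sq_nonneg w)]

lemma five_mul_sq_le_vdist_vshift {C : ℝ} (hC : 5 ≤ C) (w : ℝ) (p : ℝ × ℝ × ℝ) {j j' : ℤ}
    (hj : j ≠ j') :
    5 * w ^ 2 ≤ vdist (vshift (C * j * w ^ 2) p) (vshift (C * j' * w ^ 2) p) := by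
  have hint : (1 : ℝ) ≤ |(j : ℝ) - j'| := by
    exact_mod_cast Int.one_le_abs (sub_ne_zero.2 hj)
  calc 5 * w ^ 2 ≤ C * |(j : ℝ) - j'| * w ^ 2 := by
        gcongr
        exact hC.trans (le_mul_of_one_le_right (by linarith) hint)
    _ = |C * j * w ^ 2 - C * j' * w ^ 2| := (abs_shift_sub_shift (by linarith) _ _ _).symm
    _ = _ := (vdist_vshift_self _ _ p).symm

lemma abs_shift_sub_shift_le {C w J J' : ℝ} (hC : 0 ≤ C) (hw : 0 < w) (hJ : |J| ≤ 1 / w)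
    (hJ' : |J'| ≤ 1 / w) : |C * J * w ^ 2 - C * J' * w ^ 2| ≤ 2 * C * w :=
  calc |C * J * w ^ 2 - C * J' * w ^ 2| = C * |J - J'| * w ^ 2 :=
        abs_shift_sub_shift hC w J J'
    _ ≤ C * (1 / w + 1 / w) * w ^ 2 := by
        gcongr
        exact (abs_sub _ _).trans (add_le_add hJ hJ')
    _ = 2 * C * w := by
        field_simp
        ring

lemma five_mul_sq_add_two_mul_le_vdist_vshift {C w J J' : ℝ} {p p' : ℝ × ℝ × ℝ} (hC : 5 ≤ C)
    (hw : 0 < w) (hw1 : w ≤ 1) (hJ : |J| ≤ 1 / w) (hJ' : |J'| ≤ 1 / w)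
    (hp : C ^ 2 * w ≤ vdist p p') :
    5 * w ^ 2 + 2 * w ≤ vdist (vshift (C * J * w ^ 2) p) (vshift (C * J' * w ^ 2) p') := by
  have hquad : 5 * w + 2 ≤ C ^ 2 - 2 * C :=
    calc 5 * w + 2 ≤ 5 * (5 - 2) := by linarith
      _ ≤ C * (C - 2) := by gcongr
      _ = C ^ 2 - 2 * C := by ring
  calc 5 * w ^ 2 + 2 * w = w * (5 * w + 2) := by ring
    _ ≤ w * (C ^ 2 - 2 * C) := by gcongr
    _ = C ^ 2 * w - 2 * C * w := by ring
    _ ≤ vdist p p' - |C * J * w ^ 2 - C * J' * w ^ 2| :=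
        sub_le_sub hp (abs_shift_sub_shift_le (by linarith) hw hJ hJ')
    _ ≤ _ := vdist_sub_abs_le_vdist_vshift _ _ p p'

lemma pairwise_gap_le_vdist_vshift {ι : Type*} {q : ι → ℝ × ℝ × ℝ} {C w : ℝ} (hC : 5 ≤ C)
    (hw : 0 < w) (hw1 : w ≤ 1) (hqx : ∀ i i', |(q i).1 - (q i').1| ≤ 1)
    (hqθ : ∀ i i', |(q i).2.2 - (q i').2.2| ≤ 1)
    (hqsep : ∀ i i', i ≠ i' → C ^ 2 * w ≤ vdist (q i) (q i')) :
    {a : ι × ℤ | |(a.2 : ℝ)| ≤ 1 / w}.Pairwise fun a b ↦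
      5 * w ^ 2 + w * (|(q a.1).2.2 - (q b.1).2.2| + |(q a.1).1 - (q b.1).1|) ≤
        vdist (vshift (C * a.2 * w ^ 2) (q a.1)) (vshift (C * b.2 * w ^ 2) (q b.1)) := by
  rintro ⟨i, j⟩ hj ⟨i', j'⟩ hj' hne
  obtain rfl | hi := eq_or_ne i i'
  · have hjj' : j ≠ j' := fun h ↦ hne (congrArg (Prod.mk i) h)
    simpa only [sub_self, abs_zero, add_zero, mul_zero] using
      five_mul_sq_le_vdist_vshift hC w (q i) hjj'
  · calc 5 * w ^ 2 + w * (|(q i).2.2 - (q i').2.2| + |(q i).1 - (q i').1|)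
        ≤ 5 * w ^ 2 + w * (1 + 1) := by
          gcongr
          exacts [hqθ i i', hqx i i']
      _ = 5 * w ^ 2 + 2 * w := by ring
      _ ≤ _ := five_mul_sq_add_two_mul_le_vdist_vshift hC hw hw1 hj hj' (hqsep i i' hi)

end Separation

theorem stmt13_general {ι : Type*} {C w δ₀ : ℝ} {q : ι → ℝ × ℝ × ℝ} {X : Set (ℝ × ℝ × ℝ)}
    (hC : 5 ≤ C) (hw0 : 0 < w) (hw1 : w ≤ 1) (hqx : ∀ i i', |(q i).1 - (q i').1| ≤ 1)
    (hqθ : ∀ i i', |(q i).2.2 - (q i').2.2| ≤ 1)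
    (hqsep : ∀ i i', i ≠ i' → C ^ 2 * w ≤ vdist (q i) (q i'))
    (hδ₀ : 0 < δ₀) (hX : X ⊆ Omega)
    (hXsep : ∀ ω ∈ X, ∀ ω' ∈ X, ω ≠ ω' → δ₀ ≤ vdist ω ω') :
    (∀ i i' : ι, ∀ j j' : ℤ, |(j : ℝ)| ≤ 1 / w → |(j' : ℝ)| ≤ 1 / w →
      ∀ ω ∈ X, ∀ ω' ∈ X,
        psimap w (q i).1 ((q i).2.1 + C * j * w ^ 2) (q i).2.2 ω =
          psimap w (q i').1 ((q i').2.1 + C * j' * w ^ 2) (q i').2.2 ω' →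
        i = i' ∧ j = j' ∧ ω = ω') ∧
    (∀ z ∈ {z : ℝ × ℝ × ℝ | ∃ i : ι, ∃ j : ℤ, |(j : ℝ)| ≤ 1 / w ∧ ∃ ω ∈ X,
        z = psimap w (q i).1 ((q i).2.1 + C * j * w ^ 2) (q i).2.2 ω},
      ∀ z' ∈ {z : ℝ × ℝ × ℝ | ∃ i : ι, ∃ j : ℤ, |(j : ℝ)| ≤ 1 / w ∧ ∃ ω ∈ X,
        z = psimap w (q i).1 ((q i).2.1 + C * j * w ^ 2) (q i).2.2 ω},
      z ≠ z' → w ^ 2 * min δ₀ 1 ≤ vdist z z') := by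
  have hsep := pairwise_le_vdist_rescale hw0.le
    (c := fun a : ι × ℤ ↦ vshift (C * a.2 * w ^ 2) (q a.1))
    (pairwise_gap_le_vdist_vshift hC hw0 hw1 hqx hqθ hqsep) hX
    fun ω hω ω' hω' ↦ hXsep ω hω ω' hω'
  constructor
  · intro i i' j j' hj hj' ω hω ω' hω' h
    have hε : 0 < w ^ 2 * min δ₀ 1 := by positivity
    have heq : ((i, j), ω) = ((i', j'), ω') :=
      injOn_of_pairwise_le_vdist hε hsep (mk_mem_prod hj hω) (mk_mem_prod hj' hω') h
    simpa only [Prod.mk.injEq, and_assoc] using heq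
  · rintro z ⟨i, j, hj, ω, hω, rfl⟩ z' ⟨i', j', hj', ω', hω', rfl⟩ hne
    have hidx : ((i, j), ω) ≠ ((i', j'), ω') := by
      rintro ⟨⟩
      exact hne rfl
    exact hsep (mk_mem_prod hj hω) (mk_mem_prod hj' hω') hidx

/-- Let `C ≥ 5` and `w ∈ (0, 1/(4C²))`. Let `q 1, …, q k` be configurations
in `[−1/2,1/2]² × [−1/2,1/2]` with `d(q i, q i') ≥ C²·w` for `i ≠ i'`. For `i` and each
integer `j` with `|j| ≤ 1/w`, let `ψ_{i,j} = ψ^(w)_{q i + (0, C·j·w²), θᵢ}`. Let `δ₀ > 0`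
and let `X ⊆ Ω` satisfy `d(ω, ω') ≥ δ₀` for distinct `ω, ω' ∈ X`. Then (a) the map
`(i, j, ω) ↦ ψ_{i,j}(ω)` is injective on the relevant index set, and (b) any two distinct
elements `ω̃, ω̃'` of `X̃ = ⋃ ψ_{i,j}(X)` satisfy `d(ω̃, ω̃') ≥ w² · min(δ₀, 1)`. -/
theorem stmt13 (C w : ℝ) (hC : 5 ≤ C) (hw0 : 0 < w) (hw : w < 1 / (4 * C ^ 2))
    (k : ℕ) (q : Fin k → ℝ × ℝ × ℝ)
    (hq : ∀ i, q i ∈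
      Set.Icc (-(1 / 2) : ℝ) (1 / 2) ×ˢ Set.Icc (-(1 / 2) : ℝ) (1 / 2) ×ˢ
        Set.Icc (-(1 / 2) : ℝ) (1 / 2))
    (hqsep : ∀ i i' : Fin k, i ≠ i' → C ^ 2 * w ≤ vdist (q i) (q i'))
    (δ₀ : ℝ) (hδ₀ : 0 < δ₀)
    (X : Set (ℝ × ℝ × ℝ)) (hX : X ⊆ Omega)
    (hXsep : ∀ ω ∈ X, ∀ ω' ∈ X, ω ≠ ω' → δ₀ ≤ vdist ω ω') :
    (∀ i i' : Fin k, ∀ j j' : ℤ, |(j : ℝ)| ≤ 1 / w → |(j' : ℝ)| ≤ 1 / w →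
      ∀ ω ∈ X, ∀ ω' ∈ X,
        psimap w (q i).1 ((q i).2.1 + C * j * w ^ 2) (q i).2.2 ω =
          psimap w (q i').1 ((q i').2.1 + C * j' * w ^ 2) (q i').2.2 ω' →
        i = i' ∧ j = j' ∧ ω = ω') ∧
    (∀ z ∈ {z : ℝ × ℝ × ℝ | ∃ i : Fin k, ∃ j : ℤ, |(j : ℝ)| ≤ 1 / w ∧ ∃ ω ∈ X,
        z = psimap w (q i).1 ((q i).2.1 + C * j * w ^ 2) (q i).2.2 ω},
      ∀ z' ∈ {z : ℝ × ℝ × ℝ | ∃ i : Fin k, ∃ j : ℤ, |(j : ℝ)| ≤ 1 / w ∧ ∃ ω ∈ X,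
        z = psimap w (q i).1 ((q i).2.1 + C * j * w ^ 2) (q i).2.2 ω},
      z ≠ z' → w ^ 2 * min δ₀ 1 ≤ vdist z z') := by
  have hw1 : w ≤ 1 := hw.le.trans ((div_le_one (by positivity)).2 (by nlinarith))
  exact stmt13_general hC hw0 hw1
    (fun i i' ↦ (Real.dist_le_of_mem_Icc (hq i).1 (hq i').1).trans (by norm_num))
    (fun i i' ↦ (Real.dist_le_of_mem_Icc (hq i).2.2 (hq i').2.2).trans (by norm_num))
    hqsep hδ₀ hX hXsep
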